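/- Let (g, μ, γ) be a finite dimensional Lie bialgebra, and let {·,·} be the 'big bracket' on Λ(g ⊕ g*) determined by the canonical pairing. Then g and g* are abelian with respect to {·,·}, and (g, g*, μ, γ) is a Lie bialgebra if and only if {θ, θ} = 0 where θ = μ + γ ∈ Λ³(g ⊕ g*); equivalently {μ,μ} = {γ,γ} = {μ,γ} = 0, where {μ,μ}=0 is the Jacobi identity for the bracket μ, {γ,γ}=0 is the Jacobi identity for the cobracket γ* on g*, and {μ,γ}=0 is the 1-cocycle condition on γ. -/

import Mathlib

open ExteriorAlgebra

/-- The degree-`k` part of the exterior algebra `Λ(g ⊕ g*)`. -/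
noncomputable def bbGrade (G : Type*) [AddCommGroup G] [Module ℝ G] (k : ℕ) :
    Submodule ℝ (ExteriorAlgebra ℝ (G × Module.Dual ℝ G)) :=
  (LinearMap.range (ExteriorAlgebra.ι ℝ :
    G × Module.Dual ℝ G →ₗ[ℝ] ExteriorAlgebra ℝ (G × Module.Dual ℝ G))) ^ k

/-- The axioms of the big bracket, bundled. -/
structure IsBigBracket {G : Type*} [AddCommGroup G] [Module ℝ G]
    (P : ExteriorAlgebra ℝ (G × Module.Dual ℝ G) →ₗ[ℝ]
      ExteriorAlgebra ℝ (G × Module.Dual ℝ G) →ₗ[ℝ]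
        ExteriorAlgebra ℝ (G × Module.Dual ℝ G)) : Prop where
  gg : ∀ a b : G, P (ι ℝ (a, 0)) (ι ℝ (b, 0)) = 0
  dd : ∀ ξ η : Module.Dual ℝ G, P (ι ℝ (0, ξ)) (ι ℝ (0, η)) = 0
  dg : ∀ (ξ : Module.Dual ℝ G) (a : G),
      P (ι ℝ (0, ξ)) (ι ℝ (a, 0)) = algebraMap ℝ _ (ξ a)
  skew : ∀ (k l : ℕ), ∀ x ∈ bbGrade G k, ∀ y ∈ bbGrade G l,
      P x y = - ((-1 : ℝ) ^ (k * l) • P y x)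
  leib : ∀ (k l : ℕ), ∀ x ∈ bbGrade G k, ∀ y ∈ bbGrade G l, ∀ z,
      P x (y * z) = P x y * z + (-1 : ℝ) ^ (k * l) • (y * P x z)
  jac : ∀ (k l : ℕ), ∀ x ∈ bbGrade G k, ∀ y ∈ bbGrade G l, ∀ z,
      P x (P y z) = P (P x y) z + (-1 : ℝ) ^ (k * l) • P y (P x z)

namespace IsBigBracket

variable {G : Type*} [AddCommGroup G] [Module ℝ G]
  {P : ExteriorAlgebra ℝ (G × Module.Dual ℝ G) →ₗ[ℝ]
      ExteriorAlgebra ℝ (G × Module.Dual ℝ G) →ₗ[ℝ]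
        ExteriorAlgebra ℝ (G × Module.Dual ℝ G)}

theorem grade_one_mem (v : G × Module.Dual ℝ G) : ι ℝ v ∈ bbGrade G 1 := by
  simp [bbGrade]

theorem grade_one_iff {x : ExteriorAlgebra ℝ (G × Module.Dual ℝ G)} :
    x ∈ bbGrade G 1 ↔ ∃ v, ι ℝ v = x := by
  simp [bbGrade]

theorem grade_mul {k l : ℕ} {x y : ExteriorAlgebra ℝ (G × Module.Dual ℝ G)}
    (hx : x ∈ bbGrade G k) (hy : y ∈ bbGrade G l) : x * y ∈ bbGrade G (k + l) := by
  unfold bbGrade at *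
  rw [pow_add]
  exact Submodule.mul_mem_mul hx hy

theorem grade_scalar (r : ℝ) : algebraMap ℝ _ r ∈ bbGrade G 0 := by
  simp only [bbGrade, pow_zero]
  exact Submodule.algebraMap_mem r

theorem ι_split (v : G × Module.Dual ℝ G) : ι ℝ v = ι ℝ (v.1, 0) + ι ℝ (0, v.2) := by
  rw [← map_add]; simp

theorem right_one (h : IsBigBracket P) {k : ℕ} {x} (hx : x ∈ bbGrade G k) : P x 1 = 0 := by
  have h1 := h.leib k 0 x hx 1 (by simpa using grade_scalar (G := G) 1) 1
  simpa using h1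

theorem right_scalar (h : IsBigBracket P) {k : ℕ} {x} (hx : x ∈ bbGrade G k) (r : ℝ) :
    P x (algebraMap ℝ _ r) = 0 := by
  rw [Algebra.algebraMap_eq_smul_one, map_smul, h.right_one hx, smul_zero]

theorem gd (h : IsBigBracket P) (a : G) (ξ : Module.Dual ℝ G) :
    P (ι ℝ (a, 0)) (ι ℝ (0, ξ)) = algebraMap ℝ _ (ξ a) := by
  rw [h.skew 1 1 _ (grade_one_mem _) _ (grade_one_mem _), h.dg]
  simp

theorem gen (h : IsBigBracket P) (u v : G × Module.Dual ℝ G) :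
    P (ι ℝ u) (ι ℝ v) = algebraMap ℝ _ (u.2 v.1 + v.2 u.1) := by
  rw [ι_split u, ι_split v]
  simp only [map_add, LinearMap.add_apply, h.gg, h.dd, h.dg, h.gd]
  abel

theorem leib_one (h : IsBigBracket P) (u v : G × Module.Dual ℝ G) (x) :
    P (ι ℝ u) (ι ℝ v * x) = P (ι ℝ u) (ι ℝ v) * x - ι ℝ v * P (ι ℝ u) x := by
  rw [h.leib 1 1 _ (grade_one_mem u) _ (grade_one_mem v)]
  simp [sub_eq_add_neg]

theorem grade_induction {C : ExteriorAlgebra ℝ (G × Module.Dual ℝ G) → Prop} (k : ℕ)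
    (hadd : ∀ x y, C x → C y → C (x + y))
    (hmul : ∀ v, ∀ x ∈ bbGrade G k, C (ι ℝ v * x)) :
    ∀ x ∈ bbGrade G (k + 1), C x := by
  intro x hx
  unfold bbGrade at hx
  rw [pow_succ'] at hx
  refine Submodule.mul_induction_on hx ?_ hadd
  rintro _ ⟨v, rfl⟩ y hy
  exact hmul v y hy

theorem deg_left (h : IsBigBracket P) (u : G × Module.Dual ℝ G) (k : ℕ) :
    ∀ x ∈ bbGrade G (k + 1), P (ι ℝ u) x ∈ bbGrade G k := by
  induction k with
  | zero =>
    intro x hx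
    obtain ⟨v, rfl⟩ := grade_one_iff.1 hx
    rw [h.gen]
    exact grade_scalar _
  | succ k ih =>
    refine grade_induction _ ?_ ?_
    · intro x y hx hy
      rw [map_add]
      exact add_mem hx hy
    · intro v x hx
      rw [h.leib_one, h.gen]
      refine sub_mem ?_ ?_
      · simpa using grade_mul (grade_scalar (G := G) (u.2 v.1 + v.2 u.1)) hx
      · have := grade_mul (grade_one_mem v) (ih x hx)
        rwa [add_comm] at this

theorem deg_right (h : IsBigBracket P) (u : G × Module.Dual ℝ G) (k : ℕ) (x)
    (hx : x ∈ bbGrade G (k + 1)) : P x (ι ℝ u) ∈ bbGrade G k := by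
  rw [h.skew (k + 1) 1 x hx _ (grade_one_mem u)]
  exact neg_mem (Submodule.smul_mem _ _ (h.deg_left u k x hx))

theorem deg (h : IsBigBracket P) (k : ℕ) (x) (hx : x ∈ bbGrade G (k + 1)) (l : ℕ) :
    ∀ y ∈ bbGrade G (l + 1), P x y ∈ bbGrade G (k + l) := by
  induction l with
  | zero =>
    intro y hy
    obtain ⟨v, rfl⟩ := grade_one_iff.1 hy
    exact h.deg_right v k x hx
  | succ l ih =>
    refine grade_induction _ ?_ ?_
    · intro y z hy hz
      rw [map_add]
      exact add_mem hy hz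
    · intro v y hy
      rw [h.leib _ _ x hx _ (grade_one_mem v)]
      refine add_mem (grade_mul (h.deg_right v k x hx) hy) (Submodule.smul_mem _ _ ?_)
      have := grade_mul (grade_one_mem v) (ih y hy)
      rwa [show 1 + (k + l) = k + (l + 1) by omega] at this

theorem swap (h : IsBigBracket P) (u v : G × Module.Dual ℝ G) {k : ℕ} {x}
    (hx : x ∈ bbGrade G (k + 1)) :
    P (P x (ι ℝ u)) (ι ℝ v) = - P (P x (ι ℝ v)) (ι ℝ u) := by
  have h1 := h.jac (k + 1) 1 x hx _ (grade_one_mem u) (ι ℝ v)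
  rw [h.gen, h.right_scalar hx,
    h.skew 1 k _ (grade_one_mem u) _ (h.deg_right v k x hx)] at h1
  have h2 : ((-1 : ℝ) ^ ((k + 1) * 1)) * (-1) ^ (1 * k) = -1 := by
    rw [← pow_add]
    exact Odd.neg_one_pow ⟨k, by ring⟩
  rw [smul_neg, smul_smul, h2] at h1
  simp only [neg_smul, one_smul, neg_neg] at h1
  exact eq_neg_of_add_eq_zero_left h1.symm

theorem euler [FiniteDimensional ℝ G] (h : IsBigBracket P) (k : ℕ) :
    ∀ x ∈ bbGrade G k,
    ∑ i, (ι ℝ ((0 : G), (Module.finBasis ℝ G).coord i)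
            * P (ι ℝ (Module.finBasis ℝ G i, 0)) x
          + ι ℝ (Module.finBasis ℝ G i, (0 : Module.Dual ℝ G))
            * P (ι ℝ (0, (Module.finBasis ℝ G).coord i)) x) = (k : ℝ) • x := by
  set b := Module.finBasis ℝ G
  induction k with
  | zero =>
    intro x hx
    simp only [bbGrade, pow_zero] at hx
    obtain ⟨r, rfl⟩ := Submodule.mem_one.1 hx
    simp [h.right_scalar (grade_one_mem _)]
  | succ k ih =>
    refine grade_induction _ ?_ ?_
    · intro x y hx hy
      rw [smul_add, ← hx, ← hy, ← Finset.sum_add_distrib]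
      refine Finset.sum_congr rfl fun i _ => ?_
      simp only [map_add, mul_add]
      abel
    · intro v x hx
      have anti : ∀ u w : G × Module.Dual ℝ G, ∀ y,
          ι ℝ u * (ι ℝ w * y) = - (ι ℝ w * (ι ℝ u * y)) := by
        intro u w y
        have := ι_add_mul_swap (R := ℝ) u w
        rw [← mul_assoc, ← mul_assoc, ← neg_mul, eq_neg_of_add_eq_zero_left this]
      have key : ∑ i, (v.2 (b i) • ι ℝ ((0 : G), b.coord i)
          + b.coord i v.1 • ι ℝ (b i, (0 : Module.Dual ℝ G))) = ι ℝ v := by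
        simp only [← map_smul, ← map_add, ← map_sum]
        congr 1
        ext1
        · simp [Prod.fst_sum, b.sum_repr]
        · simp only [Prod.snd_sum, Prod.snd_add, Prod.smul_mk, smul_zero, add_zero]
          exact b.sum_dual_apply_smul_coord v.2
      have e : ((k + 1 : ℕ) : ℝ) • (ι ℝ v * x) = ι ℝ v * x + ι ℝ v * ((k : ℝ) • x) := by
        push_cast
        rw [add_smul, one_smul, mul_smul_comm, add_comm]
      have key2 := congrArg (· * x) key
      simp only [Finset.sum_mul] at key2
      rw [e, ← ih x hx, Finset.mul_sum]
      conv_rhs => rw [← key2]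
      rw [← Finset.sum_add_distrib]
      refine Finset.sum_congr rfl fun i _ => ?_
      rw [h.leib_one, h.leib_one, h.gen, h.gen]
      simp only [mul_sub, mul_add, add_mul, anti _ v, Algebra.algebraMap_eq_smul_one,
        smul_mul_assoc, one_mul, mul_smul_comm]
      simp
      abel

theorem nondeg [FiniteDimensional ℝ G] (h : IsBigBracket P) {k : ℕ} {x}
    (hx : x ∈ bbGrade G (k + 1)) (h1 : ∀ a, P x (ι ℝ (a, 0)) = 0)
    (h2 : ∀ ξ, P x (ι ℝ (0, ξ)) = 0) : x = 0 := by
  have e := h.euler (k + 1) x hx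
  rw [Finset.sum_eq_zero] at e
  · have : ((k + 1 : ℕ) : ℝ) ≠ 0 := by positivity
    exact (smul_eq_zero.1 e.symm).resolve_left this
  · intro i _
    rw [h.skew 1 (k + 1) _ (grade_one_mem _) x hx, h.skew 1 (k + 1) _ (grade_one_mem _) x hx,
      h1, h2]
    simp

/-- A quartic element vanishes iff it vanishes on the five types of arguments. -/
theorem quartic_zero [FiniteDimensional ℝ G] (h : IsBigBracket P) {Q} (hQ : Q ∈ bbGrade G 4)
    (h0 : ∀ a b c d : G,
      P (P (P (P Q (ι ℝ (a, 0))) (ι ℝ (b, 0))) (ι ℝ (c, 0))) (ι ℝ (d, 0)) = 0)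
    (h1 : ∀ (a b c : G) (ξ : Module.Dual ℝ G),
      P (P (P (P Q (ι ℝ (a, 0))) (ι ℝ (b, 0))) (ι ℝ (c, 0))) (ι ℝ (0, ξ)) = 0)
    (h2 : ∀ (a b : G) (ξ η : Module.Dual ℝ G),
      P (P (P (P Q (ι ℝ (a, 0))) (ι ℝ (b, 0))) (ι ℝ (0, ξ))) (ι ℝ (0, η)) = 0)
    (h3 : ∀ (a : G) (ξ η ζ : Module.Dual ℝ G),
      P (P (P (P Q (ι ℝ (a, 0))) (ι ℝ (0, ξ))) (ι ℝ (0, η))) (ι ℝ (0, ζ)) = 0)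
    (h4 : ∀ (ξ η ζ τ : Module.Dual ℝ G),
      P (P (P (P Q (ι ℝ (0, ξ))) (ι ℝ (0, η))) (ι ℝ (0, ζ))) (ι ℝ (0, τ)) = 0) :
    Q = 0 := by
  have s1 : ∀ (ξ : Module.Dual ℝ G) (a : G),
      P (P Q (ι ℝ (0, ξ))) (ι ℝ (a, 0)) = - P (P Q (ι ℝ (a, 0))) (ι ℝ (0, ξ)) :=
    fun ξ a => h.swap _ _ hQ
  have s2 : ∀ u (ξ : Module.Dual ℝ G) (a : G),
      P (P (P Q (ι ℝ u)) (ι ℝ (0, ξ))) (ι ℝ (a, 0))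
        = - P (P (P Q (ι ℝ u)) (ι ℝ (a, 0))) (ι ℝ (0, ξ)) :=
    fun u ξ a => h.swap _ _ (h.deg_right u 3 Q hQ)
  have s3 : ∀ u v (ξ : Module.Dual ℝ G) (a : G),
      P (P (P (P Q (ι ℝ u)) (ι ℝ v)) (ι ℝ (0, ξ))) (ι ℝ (a, 0))
        = - P (P (P (P Q (ι ℝ u)) (ι ℝ v)) (ι ℝ (a, 0))) (ι ℝ (0, ξ)) :=
    fun u v ξ a => h.swap _ _ (h.deg_right v 2 _ (h.deg_right u 3 Q hQ))
  have d1 : ∀ u, P Q (ι ℝ u) ∈ bbGrade G 3 := fun u => h.deg_right u 3 Q hQ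
  have d2 : ∀ u v, P (P Q (ι ℝ u)) (ι ℝ v) ∈ bbGrade G 2 := fun u v => h.deg_right v 2 _ (d1 u)
  have d3 : ∀ u v w, P (P (P Q (ι ℝ u)) (ι ℝ v)) (ι ℝ w) ∈ bbGrade G 1 :=
    fun u v w => h.deg_right w 1 _ (d2 u v)
  apply h.nondeg hQ <;> intro x <;> apply h.nondeg (d1 _) <;> intro y <;>
    apply h.nondeg (d2 _ _) <;> intro z <;> apply h.nondeg (d3 _ _ _) <;> intro t <;>
    simp only [s1, s2, s3, h0, h1, h2, h3, h4, map_neg, LinearMap.neg_apply, neg_zero]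

theorem quartic_half (h : IsBigBracket P) {m n} (hm : m ∈ bbGrade G 3) (hn : n ∈ bbGrade G 3)
    (u v w z : G × Module.Dual ℝ G) :
    P (P (P (P m (P n (ι ℝ u))) (ι ℝ v)) (ι ℝ w)) (ι ℝ z) =
      (P (P (P n (ι ℝ u)) (ι ℝ v)) (P (P m (ι ℝ w)) (ι ℝ z))
        + P (P (P n (ι ℝ u)) (ι ℝ z)) (P (P m (ι ℝ v)) (ι ℝ w))
        - P (P (P n (ι ℝ u)) (ι ℝ w)) (P (P m (ι ℝ v)) (ι ℝ z))) := by
  have dm : ∀ u, P m (ι ℝ u) ∈ bbGrade G 2 := fun u => h.deg_right u 2 m hm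
  have dn : ∀ u, P n (ι ℝ u) ∈ bbGrade G 2 := fun u => h.deg_right u 2 n hn
  have e1 : P (P m (P n (ι ℝ u))) (ι ℝ v)
      = P m (P (P n (ι ℝ u)) (ι ℝ v)) - P (P n (ι ℝ u)) (P m (ι ℝ v)) := by
    have := h.jac 3 2 m hm _ (dn u) (ι ℝ v)
    rw [show (-1 : ℝ) ^ (3 * 2) = 1 by norm_num, one_smul] at this
    exact eq_sub_of_add_eq this.symm
  have e2 : P (P (P n (ι ℝ u)) (P m (ι ℝ v))) (ι ℝ w)
      = P (P n (ι ℝ u)) (P (P m (ι ℝ v)) (ι ℝ w))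
        - P (P m (ι ℝ v)) (P (P n (ι ℝ u)) (ι ℝ w)) := by
    have := h.jac 2 2 _ (dn u) _ (dm v) (ι ℝ w)
    rw [show (-1 : ℝ) ^ (2 * 2) = 1 by norm_num, one_smul] at this
    exact eq_sub_of_add_eq this.symm
  obtain ⟨p, hp⟩ := grade_one_iff.1 (h.deg_right v 1 _ (dn u))
  obtain ⟨q, hq⟩ := grade_one_iff.1 (h.deg_right w 1 _ (dn u))
  obtain ⟨r, hr⟩ := grade_one_iff.1 (h.deg_right w 1 _ (dm v))
  have sym : ∀ a b, a ∈ bbGrade G 1 → b ∈ bbGrade G 1 → P a b = P b a := by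
    intro a b ha hb
    rw [h.skew 1 1 a ha b hb]; simp
  have t1 : P (P (P m (ι ℝ p)) (ι ℝ w)) (ι ℝ z) = P (ι ℝ p) (P (P m (ι ℝ w)) (ι ℝ z)) := by
    rw [h.swap p w hm, map_neg, LinearMap.neg_apply, h.swap p z (dm w), neg_neg]
    exact sym _ _ (h.deg_right z 1 _ (dm w)) (grade_one_mem p)
  have t2 : P (P (P n (ι ℝ u)) (ι ℝ r)) (ι ℝ z) = - P (P (P n (ι ℝ u)) (ι ℝ z)) (ι ℝ r) :=
    h.swap r z (dn u)
  have t3 : P (P (P m (ι ℝ v)) (ι ℝ q)) (ι ℝ z) = - P (ι ℝ q) (P (P m (ι ℝ v)) (ι ℝ z)) := by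
    rw [h.swap q z (dm v)]
    exact congrArg _ (sym _ _ (h.deg_right z 1 _ (dm v)) (grade_one_mem q))
  rw [e1, map_sub, LinearMap.sub_apply, e2, map_sub, map_sub, LinearMap.sub_apply,
    LinearMap.sub_apply, ← hp, ← hq, ← hr, t1, t2, t3]
  abel

/-- The quartic form of `{m, n}` in terms of the derived brackets. -/
theorem quartic_form (h : IsBigBracket P) {m n} (hm : m ∈ bbGrade G 3) (hn : n ∈ bbGrade G 3)
    (u v w z : G × Module.Dual ℝ G) :
    P (P (P (P (P m n) (ι ℝ u)) (ι ℝ v)) (ι ℝ w)) (ι ℝ z) =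
      (P (P (P n (ι ℝ u)) (ι ℝ v)) (P (P m (ι ℝ w)) (ι ℝ z))
        + P (P (P n (ι ℝ u)) (ι ℝ z)) (P (P m (ι ℝ v)) (ι ℝ w))
        - P (P (P n (ι ℝ u)) (ι ℝ w)) (P (P m (ι ℝ v)) (ι ℝ z)))
      + (P (P (P m (ι ℝ u)) (ι ℝ v)) (P (P n (ι ℝ w)) (ι ℝ z))
        + P (P (P m (ι ℝ u)) (ι ℝ z)) (P (P n (ι ℝ v)) (ι ℝ w))
        - P (P (P m (ι ℝ u)) (ι ℝ w)) (P (P n (ι ℝ v)) (ι ℝ z))) := by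
  have e0 : P (P m n) (ι ℝ u) = P m (P n (ι ℝ u)) + P n (P m (ι ℝ u)) := by
    have := h.jac 3 3 m hm n hn (ι ℝ u)
    rw [show (-1 : ℝ) ^ (3 * 3) = -1 by norm_num, neg_smul, one_smul] at this
    rw [this, neg_add_cancel_right]
  rw [e0, map_add, LinearMap.add_apply, map_add, LinearMap.add_apply, map_add,
    LinearMap.add_apply, h.quartic_half hm hn,
    h.quartic_half hn hm]

theorem cubic_mem (u v w : G × Module.Dual ℝ G) :
    ι ℝ u * ι ℝ v * ι ℝ w ∈ bbGrade G 3 :=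
  grade_mul (grade_mul (grade_one_mem u) (grade_one_mem v)) (grade_one_mem w)

theorem cubic_zero (h : IsBigBracket P) (u v w p q : G × Module.Dual ℝ G)
    (h1 : P (ι ℝ p) (ι ℝ u) = 0) (h2 : P (ι ℝ p) (ι ℝ v) = 0)
    (h3 : P (ι ℝ q) (ι ℝ u) = 0) (h4 : P (ι ℝ q) (ι ℝ v) = 0) :
    P (P (ι ℝ u * ι ℝ v * ι ℝ w) (ι ℝ p)) (ι ℝ q) = 0 := by
  have d : ι ℝ u * ι ℝ v ∈ bbGrade G 2 := grade_mul (grade_one_mem u) (grade_one_mem v)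
  rw [h.skew 3 1 _ (cubic_mem u v w) _ (grade_one_mem p), mul_assoc, h.leib_one, h.leib_one,
    h1, h2, h.gen p w]
  simp only [zero_mul, zero_sub, mul_neg, neg_neg, Algebra.algebraMap_eq_smul_one,
    mul_smul_comm, mul_one, map_neg, map_smul, LinearMap.neg_apply, LinearMap.smul_apply]
  rw [h.skew 2 1 _ d _ (grade_one_mem q), h.leib_one, h3, h4]
  simp

/-- Equality of degree-one elements is tested by the pairing. -/
theorem one_ext [FiniteDimensional ℝ G] (h : IsBigBracket P) {x y}
    (hx : x ∈ bbGrade G 1) (hy : y ∈ bbGrade G 1)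
    (h1 : ∀ a, P x (ι ℝ (a, 0)) = P y (ι ℝ (a, 0)))
    (h2 : ∀ ξ, P x (ι ℝ (0, ξ)) = P y (ι ℝ (0, ξ))) : x = y := by
  refine sub_eq_zero.1 (h.nondeg (k := 0) (sub_mem hx hy) ?_ ?_)
  · intro a; rw [map_sub, LinearMap.sub_apply, h1, sub_self]
  · intro a; rw [map_sub, LinearMap.sub_apply, h2, sub_self]

end IsBigBracket

set_option maxHeartbeats 2000000

/-- **Lie bialgebras via the big bracket.**
Let `g` be a finite dimensional real vector space and let `P = {·,·}` be the
"big bracket" on `W = Λ(g ⊕ g*)`: the (unique) even Poisson bracket of degree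
`−2` extending the canonical pairing, i.e. vanishing on pairs of generators from
`g` and from `g*`, with `{ξ, a} = ξ(a)`, graded skew-symmetric, a graded
biderivation, and satisfying the graded Jacobi identity.  Let `bra` be a
skew-symmetric bracket on `g`, `cobra` a skew-symmetric bracket on `g*`, and let
`μ ∈ g* ∧ g* ∧ g` and `γ ∈ g ∧ g ∧ g*` be their representing cubic elements,
characterized by `{{μ,a},b} = [a,b]` and `{{γ,ξ},η} = [ξ,η]_*`.
Then `g` and `g*` are abelian for the big bracket, and `(g, bra, cobra)` is a
Lie bialgebra (Jacobi for `bra`, Jacobi for `cobra`, and the 1-cocycle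
compatibility) if and only if `{θ, θ} = 0` for `θ = μ + γ`; equivalently, if and
only if `{μ,μ} = {γ,γ} = {μ,γ} = 0`. -/
theorem lie_bialgebra_iff_big_bracket_square_zero
    {G : Type*} [AddCommGroup G] [Module ℝ G] [FiniteDimensional ℝ G]
    (P : ExteriorAlgebra ℝ (G × Module.Dual ℝ G) →ₗ[ℝ]
      ExteriorAlgebra ℝ (G × Module.Dual ℝ G) →ₗ[ℝ]
        ExteriorAlgebra ℝ (G × Module.Dual ℝ G))
    -- values on generators
    (hgg : ∀ a b : G, P (ι ℝ (a, 0)) (ι ℝ (b, 0)) = 0)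
    (hdd : ∀ ξ η : Module.Dual ℝ G, P (ι ℝ (0, ξ)) (ι ℝ (0, η)) = 0)
    (hdg : ∀ (ξ : Module.Dual ℝ G) (a : G),
      P (ι ℝ (0, ξ)) (ι ℝ (a, 0)) = algebraMap ℝ _ (ξ a))
    -- graded skew-symmetry
    (hskew : ∀ (k l : ℕ), ∀ x ∈ bbGrade G k, ∀ y ∈ bbGrade G l,
      P x y = - ((-1 : ℝ) ^ (k * l) • P y x))
    -- biderivation property (Leibniz rule)
    (hleib : ∀ (k l : ℕ), ∀ x ∈ bbGrade G k, ∀ y ∈ bbGrade G l, ∀ z,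
      P x (y * z) = P x y * z + (-1 : ℝ) ^ (k * l) • (y * P x z))
    -- graded Jacobi identity
    (hjac : ∀ (k l : ℕ), ∀ x ∈ bbGrade G k, ∀ y ∈ bbGrade G l, ∀ z,
      P x (P y z) = P (P x y) z + (-1 : ℝ) ^ (k * l) • P y (P x z))
    -- the bracket and cobracket and their representing cubic elements
    (bra : G →ₗ[ℝ] G →ₗ[ℝ] G) (hbra_skew : ∀ a b, bra a b = - bra b a)
    (cobra : Module.Dual ℝ G →ₗ[ℝ] Module.Dual ℝ G →ₗ[ℝ] Module.Dual ℝ G)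
    (hcobra_skew : ∀ ξ η, cobra ξ η = - cobra η ξ)
    (μ γ : ExteriorAlgebra ℝ (G × Module.Dual ℝ G))
    (hμmem : μ ∈ Submodule.span ℝ
      {x | ∃ (ξ η : Module.Dual ℝ G) (a : G), x = ι ℝ (0, ξ) * ι ℝ (0, η) * ι ℝ (a, 0)})
    (hγmem : γ ∈ Submodule.span ℝ
      {x | ∃ (a b : G) (ξ : Module.Dual ℝ G), x = ι ℝ (a, 0) * ι ℝ (b, 0) * ι ℝ (0, ξ)})
    (hμrec : ∀ a b : G, P (P μ (ι ℝ (a, 0))) (ι ℝ (b, 0)) = ι ℝ (bra a b, 0))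
    (hγrec : ∀ ξ η : Module.Dual ℝ G,
      P (P γ (ι ℝ (0, ξ))) (ι ℝ (0, η)) = ι ℝ (0, cobra ξ η)) :
    -- conclusions
    (∀ a b : G, P (ι ℝ (a, 0)) (ι ℝ (b, 0)) = 0) ∧
    (∀ ξ η : Module.Dual ℝ G, P (ι ℝ (0, ξ)) (ι ℝ (0, η)) = 0) ∧
    (((∀ a b c : G, bra (bra a b) c + bra (bra b c) a + bra (bra c a) b = 0) ∧
      (∀ ξ η ζ : Module.Dual ℝ G,
        cobra (cobra ξ η) ζ + cobra (cobra η ζ) ξ + cobra (cobra ζ ξ) η = 0) ∧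
      (∀ (a b : G) (ξ η : Module.Dual ℝ G),
        cobra ξ η (bra a b) =
          cobra (ξ ∘ₗ bra a) η b + cobra ξ (η ∘ₗ bra a) b
            - cobra (ξ ∘ₗ bra b) η a - cobra ξ (η ∘ₗ bra b) a)) ↔
      P (μ + γ) (μ + γ) = 0) ∧
    (P (μ + γ) (μ + γ) = 0 ↔ (P μ μ = 0 ∧ P γ γ = 0 ∧ P μ γ = 0)) := by
  have h : IsBigBracket P := ⟨hgg, hdd, hdg, hskew, hleib, hjac⟩
  have hμ : μ ∈ bbGrade G 3 := by
    refine Submodule.span_le.2 ?_ hμmem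
    rintro _ ⟨ξ, η, a, rfl⟩
    exact IsBigBracket.cubic_mem _ _ _
  have hγ : γ ∈ bbGrade G 3 := by
    refine Submodule.span_le.2 ?_ hγmem
    rintro _ ⟨ξ, η, a, rfl⟩
    exact IsBigBracket.cubic_mem _ _ _
  have d : ∀ {m}, m ∈ bbGrade G 3 → ∀ u v, P (P m (ι ℝ u)) (ι ℝ v) ∈ bbGrade G 1 :=
    fun hm u v => h.deg_right v 1 _ (h.deg_right u 2 _ hm)
  -- the values of the derived brackets
  have μdd : ∀ ξ η : Module.Dual ℝ G, P (P μ (ι ℝ (0, ξ))) (ι ℝ (0, η)) = 0 := by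
    intro ξ η
    let L : ExteriorAlgebra ℝ (G × Module.Dual ℝ G) →ₗ[ℝ]
        ExteriorAlgebra ℝ (G × Module.Dual ℝ G) :=
      P.flip (ι ℝ (0, η)) ∘ₗ P.flip (ι ℝ (0, ξ))
    have : μ ∈ LinearMap.ker L := by
      refine Submodule.span_le.2 ?_ hμmem
      rintro _ ⟨p, q, a, rfl⟩
      exact h.cubic_zero _ _ _ _ _ (hdd _ _) (hdd _ _) (hdd _ _) (hdd _ _)
    exact this
  have γgg : ∀ a b : G, P (P γ (ι ℝ (a, 0))) (ι ℝ (b, 0)) = 0 := by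
    intro a b
    let L : ExteriorAlgebra ℝ (G × Module.Dual ℝ G) →ₗ[ℝ]
        ExteriorAlgebra ℝ (G × Module.Dual ℝ G) :=
      P.flip (ι ℝ (b, 0)) ∘ₗ P.flip (ι ℝ (a, 0))
    have : γ ∈ LinearMap.ker L := by
      refine Submodule.span_le.2 ?_ hγmem
      rintro _ ⟨p, q, ξ, rfl⟩
      exact h.cubic_zero _ _ _ _ _ (hgg _ _) (hgg _ _) (hgg _ _) (hgg _ _)
    exact this
  have μgd : ∀ (a : G) (ξ : Module.Dual ℝ G),
      P (P μ (ι ℝ (a, 0))) (ι ℝ (0, ξ)) = ι ℝ (0, - (ξ ∘ₗ bra a)) := by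
    intro a ξ
    refine h.one_ext (d hμ _ _) (IsBigBracket.grade_one_mem _) ?_ ?_
    · intro b
      rw [h.swap _ _ (h.deg_right _ 2 _ hμ), hμrec, h.gd, h.dg]
      simp
    · intro η
      rw [h.swap _ _ hμ, map_neg, LinearMap.neg_apply, h.swap _ _ (h.deg_right _ 2 _ hμ), μdd,
        h.dd]
      simp
  have μdg : ∀ (a : G) (ξ : Module.Dual ℝ G),
      P (P μ (ι ℝ (0, ξ))) (ι ℝ (a, 0)) = ι ℝ (0, ξ ∘ₗ bra a) := by
    intro a ξ
    rw [h.swap _ _ hμ, μgd, ← map_neg]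
    simp
  obtain ⟨g, hg⟩ : ∃ g : Module.Dual ℝ G → G → G, ∀ ξ a (η : Module.Dual ℝ G),
      η (g ξ a) = - cobra ξ η a := by
    have : ∀ (ξ : Module.Dual ℝ G) (a : G), ∃ c : G, ∀ η : Module.Dual ℝ G,
        η c = - cobra ξ η a := by
      intro ξ a
      refine ⟨(Module.evalEquiv ℝ G).symm (- (Module.Dual.eval ℝ G a ∘ₗ cobra ξ)), fun η => ?_⟩
      rw [Module.apply_evalEquiv_symm_apply]
      simp
    choose g hg using this
    exact ⟨g, hg⟩
  have γdg : ∀ (a : G) (ξ : Module.Dual ℝ G),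
      P (P γ (ι ℝ (0, ξ))) (ι ℝ (a, 0)) = ι ℝ (g ξ a, 0) := by
    intro a ξ
    refine h.one_ext (d hγ _ _) (IsBigBracket.grade_one_mem _) ?_ ?_
    · intro b
      rw [h.swap _ _ hγ, map_neg, LinearMap.neg_apply, h.swap _ _ (h.deg_right _ 2 _ hγ), γgg,
        h.gg]
      simp
    · intro η
      rw [h.swap _ _ (h.deg_right _ 2 _ hγ), hγrec, h.gd, h.dg, hg]
      simp
  have γgd : ∀ (a : G) (ξ : Module.Dual ℝ G),
      P (P γ (ι ℝ (a, 0))) (ι ℝ (0, ξ)) = ι ℝ (- g ξ a, 0) := by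
    intro a ξ
    rw [h.swap _ _ hγ, γdg, ← map_neg]
    simp
  have inj : ∀ r : ℝ, algebraMap ℝ (ExteriorAlgebra ℝ (G × Module.Dual ℝ G)) r = 0 ↔ r = 0 :=
    fun r => by simp
  -- the quartic forms
  have fμμ : ∀ (a b c : G) (ξ : Module.Dual ℝ G),
      P (P (P (P (P μ μ) (ι ℝ (a, 0))) (ι ℝ (b, 0))) (ι ℝ (c, 0))) (ι ℝ (0, ξ))
      = algebraMap ℝ _ (2 * ξ (bra (bra a b) c + bra (bra b c) a + bra (bra c a) b)) := by
    intro a b c ξ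
    rw [h.quartic_form hμ hμ]
    simp only [hμrec, μgd, h.gd, h.dg, ← map_add, ← map_sub]
    congr 1
    simp only [LinearMap.neg_apply, LinearMap.comp_apply, map_add]
    rw [hbra_skew (bra a b) c, hbra_skew (bra b c) a, hbra_skew (bra c a) b, hbra_skew c a]
    simp only [map_neg]
    ring
  have fγγ : ∀ (a : G) (ξ η ζ : Module.Dual ℝ G),
      P (P (P (P (P γ γ) (ι ℝ (a, 0))) (ι ℝ (0, ξ))) (ι ℝ (0, η))) (ι ℝ (0, ζ))
      = algebraMap ℝ _ (-2 *
        (cobra (cobra ξ η) ζ + cobra (cobra η ζ) ξ + cobra (cobra ζ ξ) η) a) := by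
    intro a ξ η ζ
    rw [h.quartic_form hγ hγ]
    simp only [hγrec, γgd, h.gd, h.dg, ← map_add, ← map_sub]
    congr 1
    simp only [LinearMap.add_apply, map_neg, hg]
    rw [hcobra_skew (cobra ξ η) ζ, hcobra_skew (cobra η ζ) ξ, hcobra_skew (cobra ζ ξ) η,
      hcobra_skew ζ ξ]
    simp only [map_neg, LinearMap.neg_apply]
    ring
  have fμγ : ∀ (a b : G) (ξ η : Module.Dual ℝ G),
      P (P (P (P (P μ γ) (ι ℝ (a, 0))) (ι ℝ (b, 0))) (ι ℝ (0, ξ))) (ι ℝ (0, η))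
      = algebraMap ℝ _ (cobra ξ η (bra a b) - (cobra (ξ ∘ₗ bra a) η b + cobra ξ (η ∘ₗ bra a) b
            - cobra (ξ ∘ₗ bra b) η a - cobra ξ (η ∘ₗ bra b) a)) := by
    intro a b ξ η
    rw [h.quartic_form hμ hγ]
    simp only [hγrec, hμrec, γgg, μdd, μgd, γgd, h.gd, h.dg,
      map_zero, LinearMap.zero_apply, zero_add]
    simp only [← map_add, ← map_sub]
    congr 1
    simp only [map_neg, LinearMap.neg_apply, hg]
    rw [hcobra_skew (ξ ∘ₗ bra a) η, hcobra_skew (ξ ∘ₗ bra b) η]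
    simp only [LinearMap.neg_apply]
    ring
  have zμμ0 : ∀ a b c e : G, P (P (P (P (P μ μ) (ι ℝ (a, 0))) (ι ℝ (b, 0))) (ι ℝ (c, 0)))
      (ι ℝ (e, 0)) = 0 := by
    intro a b c e
    rw [h.quartic_form hμ hμ]
    simp [hμrec, hgg]
  have zμμ2 : ∀ (a b : G) (ξ η : Module.Dual ℝ G), P (P (P (P (P μ μ) (ι ℝ (a, 0)))
      (ι ℝ (b, 0))) (ι ℝ (0, ξ))) (ι ℝ (0, η)) = 0 := by
    intro a b ξ η
    rw [h.quartic_form hμ hμ]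
    simp only [hμrec, μdd, μgd, hdd, map_zero, LinearMap.zero_apply, add_zero, sub_zero]
  have zμμ3 : ∀ (a : G) (ξ η ζ : Module.Dual ℝ G), P (P (P (P (P μ μ) (ι ℝ (a, 0)))
      (ι ℝ (0, ξ))) (ι ℝ (0, η))) (ι ℝ (0, ζ)) = 0 := by
    intro a ξ η ζ
    rw [h.quartic_form hμ hμ]
    simp only [μdd, map_zero, add_zero, sub_zero]
  have zμμ4 : ∀ (ξ η ζ τ : Module.Dual ℝ G), P (P (P (P (P μ μ) (ι ℝ (0, ξ)))
      (ι ℝ (0, η))) (ι ℝ (0, ζ))) (ι ℝ (0, τ)) = 0 := by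
    intro ξ η ζ τ
    rw [h.quartic_form hμ hμ]
    simp only [μdd, map_zero, add_zero, sub_zero]
  have zγγ0 : ∀ a b c e : G, P (P (P (P (P γ γ) (ι ℝ (a, 0))) (ι ℝ (b, 0))) (ι ℝ (c, 0)))
      (ι ℝ (e, 0)) = 0 := by
    intro a b c e
    rw [h.quartic_form hγ hγ]
    simp only [γgg, map_zero, add_zero, sub_zero]
  have zγγ1 : ∀ (a b c : G) (ξ : Module.Dual ℝ G), P (P (P (P (P γ γ) (ι ℝ (a, 0)))
      (ι ℝ (b, 0))) (ι ℝ (c, 0))) (ι ℝ (0, ξ)) = 0 := by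
    intro a b c ξ
    rw [h.quartic_form hγ hγ]
    simp only [γgg, map_zero, LinearMap.zero_apply, add_zero, sub_zero]
  have zγγ2 : ∀ (a b : G) (ξ η : Module.Dual ℝ G), P (P (P (P (P γ γ) (ι ℝ (a, 0)))
      (ι ℝ (b, 0))) (ι ℝ (0, ξ))) (ι ℝ (0, η)) = 0 := by
    intro a b ξ η
    rw [h.quartic_form hγ hγ]
    simp only [γgg, γgd, hgg, map_zero, map_neg, LinearMap.neg_apply, LinearMap.zero_apply,
      add_zero, sub_zero, neg_zero]
  have zγγ4 : ∀ (ξ η ζ τ : Module.Dual ℝ G), P (P (P (P (P γ γ) (ι ℝ (0, ξ)))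
      (ι ℝ (0, η))) (ι ℝ (0, ζ))) (ι ℝ (0, τ)) = 0 := by
    intro ξ η ζ τ
    rw [h.quartic_form hγ hγ]
    simp only [hγrec, hdd, add_zero, sub_zero]
  have zμγ0 : ∀ a b c e : G, P (P (P (P (P μ γ) (ι ℝ (a, 0))) (ι ℝ (b, 0))) (ι ℝ (c, 0)))
      (ι ℝ (e, 0)) = 0 := by
    intro a b c e
    rw [h.quartic_form hμ hγ]
    simp only [γgg, map_zero, LinearMap.zero_apply, add_zero, sub_zero]
  have zμγ1 : ∀ (a b c : G) (ξ : Module.Dual ℝ G), P (P (P (P (P μ γ) (ι ℝ (a, 0)))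
      (ι ℝ (b, 0))) (ι ℝ (c, 0))) (ι ℝ (0, ξ)) = 0 := by
    intro a b c ξ
    rw [h.quartic_form hμ hγ]
    simp only [γgg, γgd, hμrec, hgg, map_zero, map_neg, LinearMap.neg_apply,
      LinearMap.zero_apply, add_zero, sub_zero, neg_zero]
  have zμγ3 : ∀ (a : G) (ξ η ζ : Module.Dual ℝ G), P (P (P (P (P μ γ) (ι ℝ (a, 0)))
      (ι ℝ (0, ξ))) (ι ℝ (0, η))) (ι ℝ (0, ζ)) = 0 := by
    intro a ξ η ζ
    rw [h.quartic_form hμ hγ]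
    simp only [μdd, μgd, hγrec, hdd, map_zero, LinearMap.zero_apply, add_zero, sub_zero]
  have zμγ4 : ∀ (ξ η ζ τ : Module.Dual ℝ G), P (P (P (P (P μ γ) (ι ℝ (0, ξ)))
      (ι ℝ (0, η))) (ι ℝ (0, ζ))) (ι ℝ (0, τ)) = 0 := by
    intro ξ η ζ τ
    rw [h.quartic_form hμ hγ]
    simp only [μdd, map_zero, LinearMap.zero_apply, add_zero, sub_zero]
  have Qμμ : P μ μ ∈ bbGrade G 4 := h.deg 2 μ hμ 2 μ hμ
  have Qγγ : P γ γ ∈ bbGrade G 4 := h.deg 2 γ hγ 2 γ hγ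
  have Qμγ : P μ γ ∈ bbGrade G 4 := h.deg 2 μ hμ 2 γ hγ
  have iμμ : (∀ a b c : G, bra (bra a b) c + bra (bra b c) a + bra (bra c a) b = 0) →
      P μ μ = 0 := by
    intro hJ
    refine h.quartic_zero Qμμ zμμ0 ?_ zμμ2 zμμ3 zμμ4
    intro a b c ξ
    rw [fμμ, hJ]
    simp
  have iγγ : (∀ ξ η ζ : Module.Dual ℝ G,
        cobra (cobra ξ η) ζ + cobra (cobra η ζ) ξ + cobra (cobra ζ ξ) η = 0) →
      P γ γ = 0 := by
    intro hJ
    refine h.quartic_zero Qγγ zγγ0 zγγ1 zγγ2 ?_ zγγ4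
    intro a ξ η ζ
    rw [fγγ, hJ]
    simp
  have iμγ : (∀ (a b : G) (ξ η : Module.Dual ℝ G),
        cobra ξ η (bra a b) =
          cobra (ξ ∘ₗ bra a) η b + cobra ξ (η ∘ₗ bra a) b
            - cobra (ξ ∘ₗ bra b) η a - cobra ξ (η ∘ₗ bra b) a) → P μ γ = 0 := by
    intro hJ
    refine h.quartic_zero Qμγ zμγ0 zμγ1 ?_ zμγ3 zμγ4
    intro a b ξ η
    rw [fμγ, hJ, sub_self, map_zero]
  have hθ : P (μ + γ) (μ + γ) = P μ μ + ((2 : ℝ) • P μ γ + P γ γ) := by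
    have : P γ μ = P μ γ := by
      rw [h.skew 3 3 γ hγ μ hμ, show (-1 : ℝ) ^ (3 * 3) = -1 by norm_num]
      simp
    simp only [map_add, LinearMap.add_apply, this, two_smul]
    abel
  have conv : P (μ + γ) (μ + γ) = 0 →
      (∀ a b c : G, bra (bra a b) c + bra (bra b c) a + bra (bra c a) b = 0) ∧
      (∀ ξ η ζ : Module.Dual ℝ G,
        cobra (cobra ξ η) ζ + cobra (cobra η ζ) ξ + cobra (cobra ζ ξ) η = 0) ∧
      (∀ (a b : G) (ξ η : Module.Dual ℝ G),
        cobra ξ η (bra a b) =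
          cobra (ξ ∘ₗ bra a) η b + cobra ξ (η ∘ₗ bra a) b
            - cobra (ξ ∘ₗ bra b) η a - cobra ξ (η ∘ₗ bra b) a) := by
    intro h0
    rw [hθ] at h0
    have F : ∀ u v w z, P (P (P (P (P μ μ) (ι ℝ u)) (ι ℝ v)) (ι ℝ w)) (ι ℝ z)
        + ((2 : ℝ) • P (P (P (P (P μ γ) (ι ℝ u)) (ι ℝ v)) (ι ℝ w)) (ι ℝ z)
          + P (P (P (P (P γ γ) (ι ℝ u)) (ι ℝ v)) (ι ℝ w)) (ι ℝ z)) = 0 := by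
      intro u v w z
      have := congrArg (fun Q => P (P (P (P Q (ι ℝ u)) (ι ℝ v)) (ι ℝ w)) (ι ℝ z)) h0
      simpa only [map_add, map_smul, LinearMap.add_apply, LinearMap.smul_apply, map_zero,
        LinearMap.zero_apply] using this
    refine ⟨fun a b c => ?_, fun ξ η ζ => ?_, fun a b ξ η => ?_⟩
    · refine (Module.forall_dual_apply_eq_zero_iff ℝ _).1 fun ξ => ?_
      have := F (a, 0) (b, 0) (c, 0) (0, ξ)
      rw [zμγ1, zγγ1, smul_zero, add_zero, add_zero, fμμ, inj] at this
      linarith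
    · ext a
      have := F (a, 0) (0, ξ) (0, η) (0, ζ)
      rw [zμγ3, zμμ3, smul_zero, zero_add, zero_add, fγγ, inj] at this
      rw [LinearMap.zero_apply]
      linarith
    · have := F (a, 0) (b, 0) (0, ξ) (0, η)
      rw [zμμ2, zγγ2, zero_add, add_zero, fμγ, smul_eq_zero, inj] at this
      exact sub_eq_zero.1 (this.resolve_left two_ne_zero)
  refine ⟨hgg, hdd, ⟨?_, conv⟩, ?_, ?_⟩
  · rintro ⟨h1, h2, h3⟩
    rw [hθ, iμμ h1, iγγ h2, iμγ h3]
    simp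
  · intro h0
    obtain ⟨h1, h2, h3⟩ := conv h0
    exact ⟨iμμ h1, iγγ h2, iμγ h3⟩
  · rintro ⟨h1, h2, h3⟩
    rw [hθ, h1, h2, h3]
    simp
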